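/- Let n ≥ d be positive integers, let N and R be real n×d matrices, let K be a d×d symmetric positive definite matrix, and let c > 0 be a real number such that Nᵀ·R = c·K (equivalently Rᵀ·N = c·K). Let G be any n×n symmetric positive definite matrix, set P = I − N·(Nᵀ·N)⁻¹·Nᵀ, and define M = R·(Rᵀ·N)⁻¹·Rᵀ + P·G·P. Then M is symmetric positive definite. -/

import Mathlib

/-!
Put `S = Rᵀ N = c K`, which is positive definite. Both summands of `M` are congruences,
`R S⁻¹ Rᵀ` and `Pᵀ G P`, hence positive semidefinite, and `xᵀ M x = 0` would force `Rᵀ x = 0`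
and `P x = 0`. The second equation says `x = N y` with `y = (Nᵀ N)⁻¹ Nᵀ x`; substituting it in the
first gives `S y = 0`, so `y = 0` and `x = 0`.
-/

open Matrix

/-- The mimetic family of mass matrices `M = R (Rᵀ N)⁻¹ Rᵀ + P G P`, with
`P = I − N (Nᵀ N)⁻¹ Nᵀ` and `G` symmetric positive definite, is symmetric
positive definite. -/
theorem mimetic_mass_matrix_posDef {n d : ℕ} (hn : 0 < n) (hd : 0 < d) (hdn : d ≤ n)
    (N R : Matrix (Fin n) (Fin d) ℝ) (K : Matrix (Fin d) (Fin d) ℝ)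
    (hK : K.PosDef) (c : ℝ) (hc : 0 < c)
    (hNR : Nᵀ * R = c • K)
    (G : Matrix (Fin n) (Fin n) ℝ) (hG : G.PosDef)
    (P M : Matrix (Fin n) (Fin n) ℝ)
    (hP : P = 1 - N * (Nᵀ * N)⁻¹ * Nᵀ)
    (hM : M = R * (Rᵀ * N)⁻¹ * Rᵀ + P * G * P) :
    M.PosDef := by
  have hS : (Rᵀ * N).PosDef := by
    have h : Rᵀ * N = (Nᵀ * R)ᵀ := by simp
    rw [h, hNR]
    exact (hK.smul hc).transpose
  have hPt : Pᵀ = P := by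
    simp [hP, transpose_nonsing_inv, Matrix.mul_assoc]
  have hSD := hS.inv
  have hA : (R * (Rᵀ * N)⁻¹ * Rᵀ).PosSemidef := by
    simpa using hSD.posSemidef.mul_mul_conjTranspose_same R
  have hB : (P * G * P).PosSemidef := by
    simpa [hPt] using hG.posSemidef.mul_mul_conjTranspose_same P
  have eA (x : Fin n → ℝ) : x ⬝ᵥ ((R * (Rᵀ * N)⁻¹ * Rᵀ) *ᵥ x)
      = (Rᵀ *ᵥ x) ⬝ᵥ ((Rᵀ * N)⁻¹ *ᵥ (Rᵀ *ᵥ x)) := by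
    rw [← mulVec_mulVec, ← mulVec_mulVec, dotProduct_mulVec, ← mulVec_transpose]
  have eB (x : Fin n → ℝ) : x ⬝ᵥ ((P * G * P) *ᵥ x) = (P *ᵥ x) ⬝ᵥ (G *ᵥ (P *ᵥ x)) := by
    rw [← mulVec_mulVec, ← mulVec_mulVec, dotProduct_mulVec, ← mulVec_transpose, hPt]
  refine PosDef.of_dotProduct_mulVec_pos (hM ▸ (hA.add hB).isHermitian) fun x hx => ?_
  have nA := hA.dotProduct_mulVec_nonneg x
  have nB := hB.dotProduct_mulVec_nonneg x
  rw [hM, add_mulVec, dotProduct_add]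
  by_cases hPx : P *ᵥ x = 0
  · refine add_pos_of_pos_of_nonneg ?_ nB
    have hRx : Rᵀ *ᵥ x ≠ 0 := by
      intro hRx
      have hxN : x = N *ᵥ (((Nᵀ * N)⁻¹ * Nᵀ) *ᵥ x) := by
        rw [hP, sub_mulVec, one_mulVec, sub_eq_zero, Matrix.mul_assoc] at hPx
        rw [mulVec_mulVec]
        exact hPx
      set y := ((Nᵀ * N)⁻¹ * Nᵀ) *ᵥ x
      have hy : y = 0 := by
        apply mulVec_injective_of_isUnit hS.isUnit
        change (Rᵀ * N) *ᵥ y = (Rᵀ * N) *ᵥ 0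
        rw [← mulVec_mulVec, ← hxN, hRx, mulVec_zero]
      rw [hy, mulVec_zero] at hxN
      exact hx hxN
    have h := hSD.dotProduct_mulVec_pos hRx
    rw [star_trivial] at h ⊢
    rwa [eA]
  · refine add_pos_of_nonneg_of_pos nA ?_
    have h := hG.dotProduct_mulVec_pos hPx
    rw [star_trivial] at h ⊢
    rwa [eB]
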